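/- Let E⁻ be a finite-dimensional normed space, E a Banach space, and F : E⁻ → E⁻ a continuous injective map satisfying c‖ζ₁ − ζ₂‖ ≤ ‖F(ζ₁) − F(ζ₂)‖ for some c > 0 and all ζ₁, ζ₂ ∈ E⁻. Then F is a homeomorphism of E⁻ onto E⁻ (i.e. F is surjective with continuous inverse). -/

import Mathlib

namespace GraphTransformAux

open MeasureTheory Measure Set Filter Topology

theorem aux_interp (n : ℕ) (δ : ℝ) (hδ : 0 < δ) :
    ∃ (l τ : Fin (n+1) → ℝ), (∀ i, 0 < τ i ∧ τ i < δ) ∧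
      ∀ p : Polynomial ℝ, p.natDegree ≤ n → p.eval 1 = ∑ i, l i * p.eval (τ i) := by
  classical
  let τ : Fin (n+1) → ℝ := fun i => δ / ((i : ℝ) + 2)
  have hinj : Function.Injective τ := by
    intro i j hij
    have h1 : ((i:ℕ) : ℝ) + 2 ≠ 0 := by positivity
    have h2 : ((j:ℕ) : ℝ) + 2 ≠ 0 := by positivity
    simp only [τ] at hij
    rw [div_eq_div_iff h1 h2] at hij
    have := mul_left_cancel₀ hδ.ne' hij
    apply Fin.ext
    have h3 : ((i:ℕ) : ℝ) = ((j:ℕ):ℝ) := by linarith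
    exact_mod_cast h3
  refine ⟨fun i => (Lagrange.basis Finset.univ τ i).eval 1, τ, fun i => ⟨by positivity, ?_⟩, ?_⟩
  · have : (0:ℝ) ≤ (i:ℕ) := by positivity
    exact div_lt_self hδ (by linarith)
  · intro p hp
    have h := Lagrange.eq_interpolate (s := Finset.univ) (v := τ) (f := p) hinj.injOn
      (by
        refine lt_of_le_of_lt Polynomial.degree_le_natDegree ?_
        simp only [Finset.card_univ, Fintype.card_fin]
        exact_mod_cast Nat.lt_succ_of_le hp)
    conv_lhs => rw [h, Lagrange.interpolate_apply]
    rw [Polynomial.eval_finsetSum]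
    refine Finset.sum_congr rfl fun i _ => ?_
    simp [mul_comm]

set_option linter.unusedSectionVars false

variable {E : Type*} [NormedAddCommGroup E] [InnerProductSpace ℝ E] [FiniteDimensional ℝ E]

theorem aux_detpoly (A : E →L[ℝ] E) :
    ∃ p : Polynomial ℝ, p.natDegree ≤ Module.finrank ℝ E ∧
      ∀ t : ℝ, p.eval t = (ContinuousLinearMap.id ℝ E + t • A).det := by
  classical
  let b := Module.finBasis ℝ E
  let M := LinearMap.toMatrix b b (A : E →ₗ[ℝ] E)
  refine ⟨((Polynomial.X : Polynomial ℝ) • M.map (Polynomial.C : ℝ →+* Polynomial ℝ) +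
    (1 : Matrix (Fin (Module.finrank ℝ E)) (Fin (Module.finrank ℝ E)) ℝ).map Polynomial.C).det, ?_, ?_⟩
  · simpa using Polynomial.natDegree_det_X_add_C_le M 1
  · intro t
    rw [← Polynomial.coe_evalRingHom, RingHom.map_det]
    have : (ContinuousLinearMap.id ℝ E + t • A).det
        = LinearMap.det ((LinearMap.id : E →ₗ[ℝ] E) + t • (A : E →ₗ[ℝ] E)) := rfl
    rw [this, ← LinearMap.det_toMatrix b]
    congr 1
    ext i j
    by_cases hij : i = j <;>
      simp [M, hij, add_comm] <;> exact mul_comm _ _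

theorem aux_proj (x y : E) (hx : 1 ≤ ‖x‖) (hxy : ‖x‖ ≤ ‖y‖) :
    ‖‖x‖⁻¹ • x - ‖y‖⁻¹ • y‖ ≤ 2 * ‖x - y‖ := by
  have h0 : 0 < ‖x‖ := by linarith
  have h1 : 0 < ‖y‖ := by linarith
  have e : ‖x‖⁻¹ • x - ‖y‖⁻¹ • y = ‖x‖⁻¹ • (x - y) + (‖x‖⁻¹ - ‖y‖⁻¹) • y := by
    rw [smul_sub, sub_smul]; abel
  rw [e]
  refine (norm_add_le _ _).trans ?_
  rw [norm_smul, norm_smul, norm_inv, norm_norm]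
  have hi : ‖x‖⁻¹ ≤ 1 := inv_le_one_of_one_le₀ hx
  have hi0 : 0 ≤ ‖x‖⁻¹ := by positivity
  have h2 : ‖‖x‖⁻¹ - ‖y‖⁻¹‖ * ‖y‖ = ‖x‖⁻¹ * (‖y‖ - ‖x‖) := by
    rw [Real.norm_of_nonneg (sub_nonneg.2 (inv_anti₀ h0 hxy))]
    field_simp
  have h3 : ‖y‖ - ‖x‖ ≤ ‖x - y‖ := by rw [norm_sub_rev]; exact norm_sub_norm_le y x
  rw [h2]
  nlinarith [norm_nonneg (x-y)]

theorem aux_proj2 (x y : E) (hx : ‖x‖ ≤ 1) (hxy : 1 ≤ ‖y‖) :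
    ‖x - ‖y‖⁻¹ • y‖ ≤ 2 * ‖x - y‖ := by
  have h1 : 0 < ‖y‖ := by linarith
  have e : x - ‖y‖⁻¹ • y = (x - y) + (1 - ‖y‖⁻¹) • y := by
    rw [sub_smul, one_smul]; abel
  rw [e]
  refine (norm_add_le _ _).trans ?_
  rw [norm_smul]
  have h2 : ‖1 - ‖y‖⁻¹‖ * ‖y‖ = ‖y‖ - 1 := by
    rw [Real.norm_of_nonneg (sub_nonneg.2 (inv_le_one_of_one_le₀ hxy))]
    field_simp
  have h3 : ‖y‖ - ‖x‖ ≤ ‖x - y‖ := by rw [norm_sub_rev]; exact norm_sub_norm_le y x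
  rw [h2]; linarith

theorem aux_lip (r : E → E) (hr : ContDiff ℝ 1 r)
    (hout : ∀ x, 1 ≤ ‖x‖ → r x = ‖x‖⁻¹ • x) :
    ∃ K : ℝ, 0 < K ∧ ∀ x y, ‖r x - r y‖ ≤ K * ‖x - y‖ := by
  obtain ⟨K, hK⟩ := hr.contDiffOn.exists_lipschitzOnWith (s := Metric.closedBall (0:E) 1)
    one_ne_zero (convex_closedBall _ _) (isCompact_closedBall _ _)
  refine ⟨2 * K + 2, by positivity, ?_⟩
  have key : ∀ x y, ‖x‖ ≤ ‖y‖ → ‖r x - r y‖ ≤ (2 * K + 2) * ‖x - y‖ := by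
    intro x y hxy
    have hn := norm_nonneg (x - y)
    have hK0 : (0:ℝ) ≤ K := K.2
    rcases le_total 1 ‖x‖ with hx | hx
    · rw [hout x hx, hout y (hx.trans hxy)]
      have := aux_proj x y hx hxy
      nlinarith
    · rcases le_total 1 ‖y‖ with hy | hy
      · have hu : ‖‖y‖⁻¹ • y‖ = 1 := by
          rw [norm_smul, norm_inv, norm_norm]; exact inv_mul_cancel₀ (by linarith)
        have h1 : r y = r (‖y‖⁻¹ • y) := by
          rw [hout _ hu.ge, hout y hy, hu]; simp
        rw [h1]
        have h2 := hK.norm_sub_le (x := x) (y := ‖y‖⁻¹ • y) (by simpa using hx)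
          (by simpa using hu.le)
        have h3 := aux_proj2 x y hx hy
        nlinarith
      · have h2 := hK.norm_sub_le (x := x) (y := y) (by simpa using hx)
          (by simpa using hy)
        nlinarith
  intro x y
  rcases le_total ‖x‖ ‖y‖ with h | h
  · exact key x y h
  · rw [norm_sub_rev, norm_sub_rev x y]; exact key y x h

theorem aux_noretract [Nontrivial E] (r : E → E) (hr : ContDiff ℝ 1 r)
    (hout : ∀ x, 1 ≤ ‖x‖ → r x = ‖x‖⁻¹ • x) (hone : ∀ x, ‖r x‖ = 1) : False := by
  borelize E
  let μ : Measure E := Measure.addHaar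
  let B := Metric.closedBall (0:E) 1
  obtain ⟨K, hK0, hK⟩ := aux_lip r hr hout
  let A : E → E →L[ℝ] E := fun x => fderiv ℝ r x - ContinuousLinearMap.id ℝ E
  have hAc : Continuous A := (hr.continuous_fderiv one_ne_zero).sub continuous_const
  have hAn : ∀ x, ‖A x‖ ≤ K + 1 := by
    intro x
    refine (norm_sub_le _ _).trans (add_le_add ?_ ContinuousLinearMap.norm_id_le)
    refine norm_fderiv_le_of_lip' ℝ hK0.le (Eventually.of_forall fun y => hK y x)
  -- det positive near id
  obtain ⟨ε, hε, hdet⟩ : ∃ ε > 0, ∀ T : E →L[ℝ] E, ‖T - ContinuousLinearMap.id ℝ E‖ < ε →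
      0 < T.det := by
    have hc := (ContinuousLinearMap.continuous_det (𝕜 := ℝ) (E := E)).continuousAt
      (x := ContinuousLinearMap.id ℝ E)
    have h1 : (0:ℝ) < (ContinuousLinearMap.id ℝ E).det := by
      have : (ContinuousLinearMap.id ℝ E).det = 1 := LinearMap.det_id
      rw [this]; norm_num
    obtain ⟨ε, hε, h⟩ := Metric.eventually_nhds_iff.1 (hc.eventually (lt_mem_nhds h1))
    exact ⟨ε, hε, fun T hT => h (by rwa [dist_eq_norm])⟩
  let δ := min (ε / (K+1)) (1 / (K + 1))
  have hδ : 0 < δ := lt_min (by positivity) (by positivity)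
  obtain ⟨l, τ, hτ, hp⟩ := aux_interp (Module.finrank ℝ E) δ hδ
  have hδ1 : δ ≤ 1 := by
    refine (min_le_right _ _).trans ?_
    rw [div_le_one (by positivity)]; linarith
  let d : ℝ → E → ℝ := fun t x => (ContinuousLinearMap.id ℝ E + t • A x).det
  have hdc : ∀ t, Continuous (d t) := fun t =>
    ContinuousLinearMap.continuous_det.comp (continuous_const.add (hAc.const_smul t))
  have hpx : ∀ x, d 1 x = ∑ i, l i * d (τ i) x := by
    intro x
    obtain ⟨p, hpd, hpe⟩ := aux_detpoly (A x)
    simp only [d, ← hpe]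
    exact hp p hpd
  have hsum : (1:ℝ) = ∑ i, l i := by
    have := hp 1 (by simp)
    simpa using this
  have hint : ∀ t, IntegrableOn (d t) B μ := fun t =>
    (hdc t).continuousOn.integrableOn_compact (isCompact_closedBall _ _)
  have hsmall : ∀ t, 0 < t → t < δ → ∫ x in B, d t x ∂μ = μ.real B := by
    intro t ht0 ht
    have htK : t * (K + 1) < 1 := by
      have := ht.trans_le (min_le_right _ _)
      rwa [lt_div_iff₀ (by positivity)] at this
    have htE : t * (K + 1) < ε := by
      have := ht.trans_le (min_le_left _ _)
      rwa [lt_div_iff₀ (by positivity)] at this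
    have hpos : ∀ x, 0 < d t x := by
      intro x
      apply hdet
      rw [add_sub_cancel_left, norm_smul, Real.norm_of_nonneg ht0.le]
      exact (mul_le_mul_of_nonneg_left (hAn x) ht0.le).trans_lt htE
    let φ : E → E := fun x => x + t • (r x - x)
    have hφd : ∀ x, HasFDerivAt φ (ContinuousLinearMap.id ℝ E + t • A x) x := by
      intro x
      have h1 : HasFDerivAt r (fderiv ℝ r x) x :=
        (hr.differentiable one_ne_zero x).hasFDerivAt
      exact (hasFDerivAt_id x).add ((h1.sub (hasFDerivAt_id x)).const_smul t)
    have hs : ∀ x y, ‖(r x - x) - (r y - y)‖ ≤ (K + 1) * ‖x - y‖ := by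
      intro x y
      have : (r x - x) - (r y - y) = (r x - r y) - (x - y) := by abel
      rw [this]
      refine (norm_sub_le _ _).trans ?_
      linarith [hK x y]
    have hφi : Function.Injective φ := by
      intro x y hxy
      have h1 : x - y = - (t • ((r x - x) - (r y - y))) := by
        simp only [φ] at hxy
        rw [smul_sub, neg_sub, sub_eq_sub_iff_add_eq_add, hxy]; abel
      have h2 : ‖x - y‖ ≤ t * ((K + 1) * ‖x - y‖) := by
        conv_lhs => rw [h1]
        rw [norm_neg, norm_smul, Real.norm_of_nonneg ht0.le]
        exact mul_le_mul_of_nonneg_left (hs x y) ht0.le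
      by_contra hne
      have h3 : 0 < ‖x - y‖ := norm_pos_iff.2 (sub_ne_zero.2 hne)
      nlinarith
    have hφs : Function.Surjective φ := by
      intro y
      have hK' : (0:ℝ) ≤ t * (K+1) := by positivity
      have hcon : ContractingWith ⟨t * (K+1), hK'⟩ (fun x => y - t • (r x - x)) := by
        refine ⟨by exact_mod_cast htK, LipschitzWith.of_dist_le_mul fun a b => ?_⟩
        rw [dist_eq_norm, dist_eq_norm]
        have : y - t • (r a - a) - (y - t • (r b - b)) = - (t • ((r a - a) - (r b - b))) := by
          rw [smul_sub t (r a - a)]; abel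
        rw [this, norm_neg, norm_smul, Real.norm_of_nonneg ht0.le]
        have := mul_le_mul_of_nonneg_left (hs a b) ht0.le
        change _ ≤ t * (K + 1) * ‖a - b‖
        linarith
      refine ⟨hcon.fixedPoint, ?_⟩
      have := hcon.fixedPoint_isFixedPt
      simp only [Function.IsFixedPt] at this
      simp only [φ]
      nth_rewrite 1 [← this]
      abel
    have himg : φ '' B = B := by
      apply Subset.antisymm
      · rintro _ ⟨x, hx, rfl⟩
        have hx' : ‖x‖ ≤ 1 := by simpa [B] using hx
        have : φ x = (1 - t) • x + t • r x := by
          simp only [φ]; rw [smul_sub, sub_smul, one_smul]; abel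
        have h2 : ‖φ x‖ ≤ 1 := by
          rw [this]
          refine (norm_add_le _ _).trans ?_
          rw [norm_smul, norm_smul, hone, Real.norm_of_nonneg ht0.le,
            Real.norm_of_nonneg (by linarith)]
          nlinarith
        simpa [B] using h2
      · intro y hy
        obtain ⟨x, rfl⟩ := hφs y
        refine ⟨x, ?_, rfl⟩
        by_contra hx
        have hx' : 1 < ‖x‖ := by simpa [B] using hx
        have hy' : ‖φ x‖ ≤ 1 := by simpa [B] using hy
        have : φ x = ((1 - t) + t * ‖x‖⁻¹) • x := by
          simp only [φ]; rw [hout x hx'.le, smul_sub, add_smul, sub_smul, one_smul, mul_smul]; abel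
        have hi : 0 < ‖x‖⁻¹ := by positivity
        rw [this, norm_smul, Real.norm_of_nonneg (by nlinarith), add_mul, mul_assoc,
          inv_mul_cancel₀ (by linarith)] at hy'
        nlinarith
    have hcv := lintegral_abs_det_fderiv_eq_addHaar_image μ (s := B) (f := φ)
      (f' := fun x => ContinuousLinearMap.id ℝ E + t • A x)
      Metric.isClosed_closedBall.measurableSet (fun x _ => (hφd x).hasFDerivWithinAt) hφi.injOn
    rw [himg] at hcv
    rw [integral_eq_lintegral_of_nonneg_ae (Eventually.of_forall fun x => (hpos x).le)
      (hint t).aestronglyMeasurable, Measure.real, ← hcv]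
    congr 1
    refine lintegral_congr fun x => ?_
    rw [abs_of_pos (hpos x)]
  have hfin : ∫ x in B, d 1 x ∂μ = μ.real B := by
    simp_rw [hpx]
    rw [integral_finsetSum _ fun i _ => (hint (τ i)).const_mul (l i)]
    simp_rw [integral_const_mul]
    rw [Finset.sum_congr rfl fun i _ => by rw [hsmall (τ i) (hτ i).1 (hτ i).2],
      ← Finset.sum_mul, ← hsum, one_mul]
  have hzero : ∀ x, d 1 x = 0 := by
    intro x
    have h1 : HasFDerivAt r (fderiv ℝ r x) x :=
      (hr.differentiable one_ne_zero x).hasFDerivAt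
    have h2 : d 1 x = LinearMap.det (fderiv ℝ r x : E →ₗ[ℝ] E) := by
      simp only [d, A, one_smul, add_sub_cancel]
    rw [h2]
    by_contra hne
    have hsurj : Function.Surjective (fderiv ℝ r x) := by
      have := LinearMap.equivOfDetNeZero (fderiv ℝ r x : E →ₗ[ℝ] E) hne
      exact (LinearMap.equivOfDetNeZero (fderiv ℝ r x : E →ₗ[ℝ] E) hne).surjective
    obtain ⟨v, hv⟩ := hsurj (r x)
    have h3 := h1.norm_sq
    have h4 : (fun y => ‖r y‖ ^ 2) = fun _ => (1:ℝ) := by funext y; simp [hone]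
    rw [h4] at h3
    have h5 := h3.unique (hasFDerivAt_const (1:ℝ) x)
    have h6 := congrArg (fun T => T v) h5
    simp [hv, hone] at h6
  have hB : 0 < μ.real B := by
    refine ENNReal.toReal_pos (Metric.measure_closedBall_pos μ 0 one_pos).ne'
      (isCompact_closedBall (0:E) 1).measure_lt_top.ne
  rw [← hfin] at hB
  simp [hzero] at hB

theorem aux_brouwer [Nontrivial E] (u : E → E) (hu : Continuous u) (M : ℝ)
    (hM : ∀ x, ‖u x‖ ≤ M) : ∃ x, u x = x := by
  by_contra! hno
  have hM0 : 0 ≤ M := (norm_nonneg _).trans (hM 0)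
  obtain ⟨g, hg, hgd, -⟩ := hu.exists_contDiff_approx 1 (ε := fun x => min 1 ‖u x - x‖)
    (by fun_prop) (fun x => lt_min one_pos (norm_pos_iff.2 (sub_ne_zero.2 (hno x))))
  have hgM : ∀ x, ‖g x‖ < M + 1 := by
    intro x
    have h1 := (hgd x).trans_le (min_le_left _ _)
    rw [dist_eq_norm] at h1
    have h2 : ‖g x‖ ≤ ‖g x - u x‖ + ‖u x‖ := norm_le_norm_sub_add _ _
    linarith [hM x]
  have hgx : ∀ x, g x ≠ x := by
    intro x hx
    have h1 := (hgd x).trans_le (min_le_right _ _)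
    rw [hx, dist_eq_norm, norm_sub_rev] at h1
    exact lt_irrefl _ h1
  let χ : ContDiffBump (0:E) := ⟨M + 1, M + 2, by linarith, by linarith⟩
  let h : E → E := fun x => x - χ x • g x
  have hh : ContDiff ℝ 1 h := contDiff_id.sub (χ.contDiff.smul hg)
  have hh0 : ∀ x, h x ≠ 0 := by
    intro x hx
    have hx' : x = χ x • g x := sub_eq_zero.1 hx
    have h1 : ‖x‖ ≤ M + 1 := by
      rw [hx', norm_smul, Real.norm_of_nonneg χ.nonneg]
      have := χ.le_one (x := x)
      nlinarith [hgM x, norm_nonneg (g x), χ.nonneg (x := x)]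
    have h2 : χ x = 1 := χ.one_of_mem_closedBall (by simpa using h1)
    rw [h2, one_smul] at hx'
    exact hgx x hx'.symm
  have hhout : ∀ x, M + 2 ≤ ‖x‖ → h x = x := by
    intro x hx
    have : χ x = 0 := χ.zero_of_le_dist (by simpa using hx)
    simp [h, this]
  have hR : 0 < M + 2 := by linarith
  refine aux_noretract (fun x => ‖h ((M+2) • x)‖⁻¹ • h ((M+2) • x)) ?_ ?_ ?_
  · have h1 : ContDiff ℝ 1 fun x : E => h ((M+2) • x) := hh.comp (contDiff_id.const_smul _)
    exact ((h1.norm ℝ fun x => hh0 _).inv fun x => norm_ne_zero_iff.2 (hh0 _)).smul h1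
  · intro x hx
    have h1 : M + 2 ≤ ‖(M+2) • x‖ := by
      rw [norm_smul, Real.norm_of_nonneg hR.le]; nlinarith
    rw [hhout _ h1, norm_smul, Real.norm_of_nonneg hR.le, smul_smul]
    congr 1
    field_simp
  · intro x
    rw [norm_smul, norm_inv, norm_norm]
    exact inv_mul_cancel₀ (norm_ne_zero_iff.2 (hh0 _))

theorem aux_surj (f : E → E) (hcont : Continuous f)
    (c : ℝ) (hc : 0 < c) (hlow : ∀ x y : E, c * ‖x - y‖ ≤ ‖f x - f y‖) :
    Function.Surjective f := by
  rcases subsingleton_or_nontrivial E with hE | hE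
  · exact fun y => ⟨y, Subsingleton.elim _ _⟩
  intro p
  by_contra! hp
  borelize E
  have hinj : Function.Injective f := by
    intro x y hxy
    have := hlow x y
    rw [hxy, sub_self, norm_zero] at this
    have h0 := norm_nonneg (x - y)
    have h1 : ‖x - y‖ = 0 := by nlinarith
    exact sub_eq_zero.1 (norm_eq_zero.1 h1)
  obtain ⟨L, G, hG, hGf⟩ : ∃ (L : NNReal) (G : E → E), LipschitzWith L G ∧ ∀ x, G (f x) = x := by
    have h1 : LipschitzOnWith ⟨c⁻¹, by positivity⟩ (Function.invFun f) (range f) := by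
      refine LipschitzOnWith.of_dist_le_mul ?_
      rintro _ ⟨x, rfl⟩ _ ⟨y, rfl⟩
      rw [Function.leftInverse_invFun hinj x, Function.leftInverse_invFun hinj y,
        dist_eq_norm, dist_eq_norm]
      change ‖x - y‖ ≤ c⁻¹ * ‖f x - f y‖
      rw [le_inv_mul_iff₀ hc]
      exact hlow x y
    obtain ⟨G, hG, hGe⟩ := h1.extend_finite_dimension
    exact ⟨_, G, hG, fun x => by
      rw [← hGe (mem_range_self x), Function.leftInverse_invFun hinj x]⟩
  let ρ : ℝ := ‖f 0 - p‖ + 1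
  have hρ : 0 < ρ := by positivity
  -- a small vector outside the image of the sphere
  have hnull : μH[Module.finrank ℝ E] (G '' Metric.sphere p ρ) = 0 := by
    have h1 := hG.hausdorffMeasure_image_le (d := Module.finrank ℝ E) (by positivity)
      (Metric.sphere p ρ)
    rw [Measure.addHaar_sphere, mul_zero] at h1
    exact le_antisymm h1 (bot_le)
  have hopen : IsOpen {v : E | ‖f v - p‖ < ρ} := isOpen_lt (by fun_prop) continuous_const
  obtain ⟨v, hv, hvG⟩ : ∃ v, ‖f v - p‖ < ρ ∧ v ∉ G '' Metric.sphere p ρ := by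
    by_contra! hcon
    have h1 : {v : E | ‖f v - p‖ < ρ} ⊆ G '' Metric.sphere p ρ := fun v hv => hcon v hv
    have h2 := hopen.measure_pos μH[Module.finrank ℝ E] ⟨0, by simp [ρ]⟩
    exact absurd (measure_mono_null h1 hnull) h2.ne'
  have hfp : ∀ x, 0 < ‖f x - p‖ := fun x => norm_pos_iff.2 (sub_ne_zero.2 (hp x))
  let m : E → ℝ := fun x => max (ρ / ‖f x - p‖) 1
  let Φ : E → E := fun x => p + m x • (f x - p)
  have hm : Continuous m :=
    (continuous_const.div (by fun_prop) fun x => (hfp x).ne').max continuous_const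
  have hΦ : Continuous Φ := continuous_const.add (hm.smul (by fun_prop))
  have hΦd : ∀ x, ‖Φ x - f x‖ ≤ ρ := by
    intro x
    have h1 : Φ x - f x = (m x - 1) • (f x - p) := by
      simp only [Φ]; rw [sub_smul, one_smul]; abel
    have h2 : 0 ≤ m x - 1 := sub_nonneg.2 (le_max_right _ _)
    rw [h1, norm_smul, Real.norm_of_nonneg h2]
    have h3 : m x ≤ ρ / ‖f x - p‖ + 1 :=
      max_le (by linarith) (by have : 0 ≤ ρ / ‖f x - p‖ := by positivity
                               linarith)
    calc (m x - 1) * ‖f x - p‖ ≤ ρ / ‖f x - p‖ * ‖f x - p‖ :=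
          mul_le_mul_of_nonneg_right (by linarith) (norm_nonneg _)
      _ = ρ := div_mul_cancel₀ _ (hfp x).ne'
  obtain ⟨x, hx⟩ := aux_brouwer (fun x => x - G (Φ x) + v)
    ((continuous_id.sub (hG.continuous.comp hΦ)).add continuous_const) (L * ρ + ‖v‖) (by
      intro x
      refine (norm_add_le _ _).trans (add_le_add ?_ le_rfl)
      have h1 := hG.norm_sub_le (Φ x) (f x)
      rw [hGf] at h1
      rw [norm_sub_rev]
      exact h1.trans (mul_le_mul_of_nonneg_left (hΦd x) L.2))
  have hx' : G (Φ x) = v := by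
    have h1 : x - G (Φ x) + v = x := hx
    have h2 : x - G (Φ x) + v = x - (G (Φ x) - v) := by abel
    rw [h2, sub_eq_self] at h1
    exact sub_eq_zero.1 h1
  rcases le_total ρ ‖f x - p‖ with hc1 | hc1
  · have h1 : m x = 1 := max_eq_right ((div_le_one (hfp x)).2 hc1)
    have h2 : Φ x = f x := by simp [Φ, h1]
    rw [h2, hGf] at hx'
    rw [hx'] at hc1
    linarith
  · have h1 : m x = ρ / ‖f x - p‖ := max_eq_left ((one_le_div (hfp x)).2 hc1)
    apply hvG
    refine ⟨Φ x, ?_, hx'⟩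
    rw [mem_sphere_iff_norm]
    simp only [Φ]
    rw [add_sub_cancel_left, norm_smul, h1, norm_div, norm_norm, Real.norm_of_nonneg hρ.le]
    exact div_mul_cancel₀ _ (hfp x).ne'

end GraphTransformAux

/-- topological core of the Graph Transform: a continuous injective
expanding-below map of a finite-dimensional normed space onto itself is a
homeomorphism. -/
theorem stmt_14 {F : Type*} [NormedAddCommGroup F] [NormedSpace ℝ F]
    [FiniteDimensional ℝ F]
    (f : F → F) (hcont : Continuous f) (hinj : Function.Injective f)
    (c : ℝ) (hc : 0 < c) (hlow : ∀ x y : F, c * ‖x - y‖ ≤ ‖f x - f y‖) :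
    Function.Surjective f ∧
    ∃ g : F → F, Continuous g ∧ Function.LeftInverse g f ∧ Function.RightInverse g f := by
  have hsurj : Function.Surjective f := by
    let e := toEuclidean (E := F)
    let a : ℝ := ‖(e : F →L[ℝ] EuclideanSpace ℝ (Fin (Module.finrank ℝ F)))‖ + 1
    let b : ℝ := ‖(e.symm : EuclideanSpace ℝ (Fin (Module.finrank ℝ F)) →L[ℝ] F)‖ + 1
    have ha : 0 < a := by positivity
    have hb : 0 < b := by positivity
    have hea : ∀ x, ‖e x‖ ≤ a * ‖x‖ := fun x =>
      ((e : F →L[ℝ] EuclideanSpace ℝ (Fin (Module.finrank ℝ F))).le_opNorm x).trans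
        (mul_le_mul_of_nonneg_right (by simp [a]) (norm_nonneg _))
    have heb : ∀ x, ‖e.symm x‖ ≤ b * ‖x‖ := fun x =>
      ((e.symm : EuclideanSpace ℝ (Fin (Module.finrank ℝ F)) →L[ℝ] F).le_opNorm x).trans
        (mul_le_mul_of_nonneg_right (by simp [b]) (norm_nonneg _))
    have h := GraphTransformAux.aux_surj (fun x => e (f (e.symm x)))
      (e.continuous.comp (hcont.comp e.symm.continuous)) (c / (a * b)) (by positivity) (by
        intro x y
        have h1 := hlow (e.symm x) (e.symm y)
        have h2 := hea (e.symm x - e.symm y)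
        have h3 := heb (e (f (e.symm x)) - e (f (e.symm y)))
        simp only [map_sub, ContinuousLinearEquiv.apply_symm_apply,
          ContinuousLinearEquiv.symm_apply_apply] at h2 h3
        rw [div_mul_eq_mul_div, div_le_iff₀ (by positivity)]
        calc c * ‖x - y‖ ≤ c * (a * ‖e.symm x - e.symm y‖) := by gcongr
          _ = a * (c * ‖e.symm x - e.symm y‖) := by ring
          _ ≤ a * (b * ‖e (f (e.symm x)) - e (f (e.symm y))‖) := by
              exact mul_le_mul_of_nonneg_left (h1.trans h3) ha.le
          _ = _ := by ring)
    intro y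
    obtain ⟨x, hx⟩ := h (e y)
    exact ⟨e.symm x, e.injective hx⟩
  refine ⟨hsurj, Function.surjInv hsurj, ?_, Function.leftInverse_surjInv ⟨hinj, hsurj⟩,
    Function.rightInverse_surjInv hsurj⟩
  refine (LipschitzWith.of_dist_le_mul (K := ⟨c⁻¹, by positivity⟩) fun x y => ?_).continuous
  have h1 := hlow (Function.surjInv hsurj x) (Function.surjInv hsurj y)
  rw [Function.surjInv_eq hsurj, Function.surjInv_eq hsurj] at h1
  rw [dist_eq_norm, dist_eq_norm]
  change _ ≤ c⁻¹ * ‖x - y‖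
  rw [le_inv_mul_iff₀ hc]
  exact h1
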